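/- Let 𝒳 be a continuous real random variable with probability density f, finite differential Rényi entropy h_α(𝒳), and finite variance σ² > 0. If 1/3 < α < 1, then h_α(𝒳) ≤ (1/2) ln( (3α−1)/(1−α) · πσ² ) + (1/(1−α)) ln( 2α/(3α−1) ) + ln( Γ(1/(1−α) − 1/2) / Γ(1/(1−α)) ). If α > 1, then h_α(𝒳) ≤ (1/2) ln( (3α−1)/(α−1) · πσ² ) + (1/(α−1)) ln( (3α−1)/(2α) ) + ln( Γ(α/(α−1)) / Γ(α/(α−1) + 1/2) ). In either case equality holds if and only if 𝒳 is an α-Gaussian random variable, i.e., f(x) is proportional to (1 + β((x−μ)/σ)²)^{1/(α−1)} restricted to where this is nonnegative, with β = (1−α)/(3α−1) and μ the mean of 𝒳. -/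

import Mathlib

open MeasureTheory Real

/-!
If `g` is the α-Gaussian density, `g ^ (α - 1)` is a multiple of the truncated quadratic
`W = max (1 + β ((x - μ) / σ) ^ 2) 0`. The function `t ↦ t ^ α / (1 - α)` is strictly concave for
`α < 1` and for `α > 1`, so integrating its tangents at the values of `g` bounds the entropy of `f`
by that of `g`, with equality only for `f = g` almost everywhere, as soon as
`∫ W f / (1 - α) ≤ ∫ W g / (1 - α)`. For `α < 1` nothing is truncated, and mass and variance force
`∫ W f = 1 + β`; for `α > 1` truncation can only increase `∫ W f`. On the other side
`∫ W g = 1 + β` is an instance of the functional equation of `Γ`, because the integrals of powers of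
`W` are quotients of `Γ`-values.
-/

/-! ### Rényi entropy -/

/-- The differential Rényi entropy of order `α` of a density `f` with respect to `ν`. -/
noncomputable def renyiEntropy {X : Type*} [MeasurableSpace X] (α : ℝ) (ν : Measure X)
    (f : X → ℝ) : ℝ :=
  1 / (1 - α) * log (∫ x, f x ^ α ∂ν)

theorem rpow_lt_tangent {α a b : ℝ} (hα0 : 0 < α) (hα1 : α < 1) (ha : 0 ≤ a) (hb : 0 < b)
    (hab : a ≠ b) : a ^ α < b ^ α + α * b ^ (α - 1) * (a - b) := by
  have hratio : -1 ≤ a / b - 1 := by linarith [div_nonneg ha hb.le]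
  have hratio0 : a / b - 1 ≠ 0 := sub_ne_zero.2 fun h => hab ((div_eq_one_iff_eq hb.ne').1 h)
  calc a ^ α = b ^ α * (1 + (a / b - 1)) ^ α := by
        rw [← mul_rpow hb.le (by linarith), add_sub_cancel, mul_div_cancel₀ a hb.ne']
    _ < b ^ α * (1 + α * (a / b - 1)) := by
        gcongr
        exact rpow_one_add_lt_one_add_mul_self hratio hratio0 hα0 hα1
    _ = b ^ α + α * b ^ (α - 1) * (a - b) := by
        rw [rpow_sub_one hb.ne']
        field_simp

theorem tangent_lt_rpow {α a b : ℝ} (hα1 : 1 < α) (ha : 0 ≤ a) (hb : 0 ≤ b) (hab : a ≠ b) :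
    b ^ α + α * b ^ (α - 1) * (a - b) < a ^ α := by
  rcases hb.eq_or_lt with rfl | hb
  · rw [zero_rpow (by linarith), zero_rpow (by linarith)]
    simpa using rpow_pos_of_pos (ha.lt_of_ne' hab) α
  have hratio : -1 ≤ a / b - 1 := by linarith [div_nonneg ha hb.le]
  have hratio0 : a / b - 1 ≠ 0 := sub_ne_zero.2 fun h => hab ((div_eq_one_iff_eq hb.ne').1 h)
  calc b ^ α + α * b ^ (α - 1) * (a - b) = b ^ α * (1 + α * (a / b - 1)) := by
        rw [rpow_sub_one hb.ne']
        field_simp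
    _ < b ^ α * (1 + (a / b - 1)) ^ α := by
        gcongr
        exact one_add_mul_self_lt_rpow_one_add hratio hratio0 hα1
    _ = a ^ α := by
        rw [← mul_rpow hb.le (by linarith), add_sub_cancel, mul_div_cancel₀ a hb.ne']

theorem one_div_one_sub_mul_rpow_lt_tangent {α a b : ℝ} (hα0 : 0 < α) (hα1 : α ≠ 1) (ha : 0 ≤ a)
    (hb : 0 ≤ b) (hb0 : α < 1 → 0 < b) (hab : a ≠ b) :
    1 / (1 - α) * a ^ α < 1 / (1 - α) * (b ^ α + α * b ^ (α - 1) * (a - b)) := by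
  rcases hα1.lt_or_gt with hα | hα
  · exact mul_lt_mul_of_pos_left (rpow_lt_tangent hα0 hα ha (hb0 hα) hab)
      (one_div_pos.2 (sub_pos.2 hα))
  · exact mul_lt_mul_of_neg_left (tangent_lt_rpow hα ha hb hab) (one_div_neg.2 (sub_neg.2 hα))

theorem mul_log_le_mul_log {s x y : ℝ} (hx : 0 < x) (hy : 0 < y) (h : s * x ≤ s * y) :
    s * log x ≤ s * log y := by
  rcases lt_trichotomy s 0 with hs | rfl | hs
  · exact mul_le_mul_of_nonpos_left (log_le_log hy ((mul_le_mul_left_of_neg hs).1 h)) hs.le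
  · simp
  · exact mul_le_mul_of_nonneg_left (log_le_log hx (le_of_mul_le_mul_left h hs)) hs.le

section Comparison

variable {X : Type*} [MeasurableSpace X] {ν : Measure X} {α : ℝ} {f g : X → ℝ}

theorem integral_rpow_pos (hα0 : α ≠ 0) (hf0 : ∀ x, 0 ≤ f x) (hf : 0 < ∫ x, f x ∂ν)
    (hfα : Integrable (fun x => f x ^ α) ν) : 0 < ∫ x, f x ^ α ∂ν := by
  have hsupport : Function.support (fun x => f x ^ α) = Function.support f := by
    ext x
    simp [rpow_eq_zero (hf0 x) hα0]
  rw [integral_pos_iff_support_of_nonneg (fun x => rpow_nonneg (hf0 x) α) hfα, hsupport]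
  exact (integral_pos_iff_support_of_nonneg hf0 (.of_integral_ne_zero hf.ne')).1 hf

-- `h` says that the linear part of the tangent to `t ↦ t ^ α / (1 - α)` at `g` has integral `≤ 0`.
theorem integral_rpow_le_and_eq_iff (hα0 : 0 < α) (hα1 : α ≠ 1) (hf0 : ∀ x, 0 ≤ f x)
    (hg0 : ∀ x, 0 ≤ g x) (hg : α < 1 → ∀ x, 0 < g x) (hfα : Integrable (fun x => f x ^ α) ν)
    (hgα : Integrable (fun x => g x ^ α) ν) (hgf : Integrable (fun x => g x ^ (α - 1) * f x) ν)
    (h : 1 / (1 - α) * ∫ x, g x ^ (α - 1) * f x ∂ν ≤ 1 / (1 - α) * ∫ x, g x ^ α ∂ν) :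
    1 / (1 - α) * ∫ x, f x ^ α ∂ν ≤ 1 / (1 - α) * ∫ x, g x ^ α ∂ν ∧
      (∫ x, f x ^ α ∂ν = ∫ x, g x ^ α ∂ν ↔ f =ᵐ[ν] g) := by
  have hα : 1 - α ≠ 0 := sub_ne_zero.2 hα1.symm
  let tangent x := 1 / (1 - α) * (g x ^ α + α * g x ^ (α - 1) * (f x - g x))
  have tangent_eq x : tangent x = g x ^ α + α / (1 - α) * (g x ^ (α - 1) * f x) := by
    have hpow : g x ^ α = g x ^ (α - 1) * g x := by
      rw [← rpow_add_one' (hg0 x) (by linarith), sub_add_cancel]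
    simp only [tangent, hpow]
    field_simp
    ring
  have lt_tangent x (hx : f x ≠ g x) : 1 / (1 - α) * f x ^ α < tangent x :=
    one_div_one_sub_mul_rpow_lt_tangent hα0 hα1 (hf0 x) (hg0 x) (fun hα => hg hα x) hx
  have le_tangent x : 1 / (1 - α) * f x ^ α ≤ tangent x := by
    rcases eq_or_ne (f x) (g x) with hx | hx
    · simp [tangent, hx]
    · exact (lt_tangent x hx).le
  have tangent_int : Integrable tangent ν :=
    (hgα.add (hgf.const_mul _)).congr (.of_forall fun x => (tangent_eq x).symm)
  have integral_tangent_le : ∫ x, tangent x ∂ν ≤ 1 / (1 - α) * ∫ x, g x ^ α ∂ν := by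
    simp only [tangent_eq]
    rw [integral_add hgα (hgf.const_mul _), integral_const_mul]
    calc _ = ∫ x, g x ^ α ∂ν + α * (1 / (1 - α) * ∫ x, g x ^ (α - 1) * f x ∂ν) := by ring
      _ ≤ ∫ x, g x ^ α ∂ν + α * (1 / (1 - α) * ∫ x, g x ^ α ∂ν) := by gcongr
      _ = 1 / (1 - α) * ∫ x, g x ^ α ∂ν := by field_simp; ring
  have le_integral_tangent : 1 / (1 - α) * ∫ x, f x ^ α ∂ν ≤ ∫ x, tangent x ∂ν := by
    rw [← integral_const_mul]
    exact integral_mono (hfα.const_mul _) tangent_int le_tangent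
  refine ⟨le_integral_tangent.trans integral_tangent_le, fun heq => ?_, fun hae => ?_⟩
  · have hint : ∫ x, 1 / (1 - α) * f x ^ α ∂ν = ∫ x, tangent x ∂ν := by
      rw [integral_const_mul]
      exact le_antisymm le_integral_tangent (heq ▸ integral_tangent_le)
    filter_upwards [(integral_eq_iff_of_ae_le (hfα.const_mul _) tangent_int
      (.of_forall le_tangent)).1 hint] with x hx
    by_contra hne
    exact (lt_tangent x hne).ne hx
  · exact integral_congr_ae (hae.fun_comp (· ^ α))

theorem renyiEntropy_le_and_eq_iff (hα0 : 0 < α) (hα1 : α ≠ 1) (hf0 : ∀ x, 0 ≤ f x)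
    (hf : 0 < ∫ x, f x ∂ν) (hfα : Integrable (fun x => f x ^ α) ν) (hg0 : ∀ x, 0 ≤ g x)
    (hg : α < 1 → ∀ x, 0 < g x) (hgα : 0 < ∫ x, g x ^ α ∂ν)
    (hgf : Integrable (fun x => g x ^ (α - 1) * f x) ν)
    (h : 1 / (1 - α) * ∫ x, g x ^ (α - 1) * f x ∂ν ≤ 1 / (1 - α) * ∫ x, g x ^ α ∂ν) :
    renyiEntropy α ν f ≤ renyiEntropy α ν g ∧
      (renyiEntropy α ν f = renyiEntropy α ν g ↔ f =ᵐ[ν] g) := by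
  have hfα_pos := integral_rpow_pos hα0.ne' hf0 hf hfα
  obtain ⟨hle, heq⟩ := integral_rpow_le_and_eq_iff hα0 hα1 hf0 hg0 hg hfα
    (.of_integral_ne_zero hgα.ne') hgf h
  refine ⟨mul_log_le_mul_log hfα_pos hgα hle, ?_⟩
  rw [← heq, renyiEntropy, renyiEntropy,
    mul_right_inj' (one_div_ne_zero (sub_ne_zero.2 hα1.symm))]
  exact log_injOn_pos.eq_iff hfα_pos hgα

end Comparison

/-! ### Densities proportional to a power of a weight -/

/-- The probability density proportional to `W ^ (1 / (α - 1))`; it maximizes the Rényi entropy of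
order `α` when the moment `∫ W f` is prescribed, as its power `α - 1` is a multiple of `W`. -/
noncomputable def powerDensity {X : Type*} [MeasurableSpace X] (α : ℝ) (ν : Measure X)
    (W : X → ℝ) (x : X) : ℝ :=
  (∫ y, W y ^ (1 / (α - 1)) ∂ν)⁻¹ * W x ^ (1 / (α - 1))

section PowerDensity

variable {X : Type*} [MeasurableSpace X] {ν : Measure X} {α : ℝ} {f W : X → ℝ}

theorem integral_rpow_nonneg (hW : ∀ x, 0 ≤ W x) (p : ℝ) : 0 ≤ ∫ x, W x ^ p ∂ν :=
  integral_nonneg fun x => rpow_nonneg (hW x) p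

theorem powerDensity_nonneg (hW : ∀ x, 0 ≤ W x) (x : X) : 0 ≤ powerDensity α ν W x :=
  mul_nonneg (inv_nonneg.2 (integral_rpow_nonneg hW _)) (rpow_nonneg (hW x) _)

theorem powerDensity_rpow_sub_one (hα1 : α ≠ 1) (hW : ∀ x, 0 ≤ W x) (x : X) :
    powerDensity α ν W x ^ (α - 1) = (∫ y, W y ^ (1 / (α - 1)) ∂ν) ^ (1 - α) * W x := by
  have hI : 0 ≤ ∫ y, W y ^ (1 / (α - 1)) ∂ν := integral_rpow_nonneg hW _
  rw [powerDensity, mul_rpow (inv_nonneg.2 hI) (rpow_nonneg (hW x) _), inv_rpow hI, ← rpow_neg hI,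
    neg_sub, ← rpow_mul (hW x), one_div_mul_cancel (sub_ne_zero.2 hα1), rpow_one]

theorem powerDensity_rpow (hα0 : α ≠ 0) (hα1 : α ≠ 1) (hW : ∀ x, 0 ≤ W x) (x : X) :
    powerDensity α ν W x ^ α =
      (∫ y, W y ^ (1 / (α - 1)) ∂ν) ^ (1 - α) * (W x * powerDensity α ν W x) := by
  rw [← mul_assoc, ← powerDensity_rpow_sub_one hα1 hW,
    ← rpow_add_one' (powerDensity_nonneg hW x) (by simpa using hα0), sub_add_cancel]

theorem integral_powerDensity_rpow (hα0 : α ≠ 0) (hα1 : α ≠ 1) (hW : ∀ x, 0 ≤ W x) :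
    ∫ x, powerDensity α ν W x ^ α ∂ν =
      (∫ y, W y ^ (1 / (α - 1)) ∂ν) ^ (1 - α) * ∫ x, W x * powerDensity α ν W x ∂ν := by
  simp only [powerDensity_rpow hα0 hα1 hW, integral_const_mul]

theorem renyiEntropy_powerDensity (hα0 : α ≠ 0) (hα1 : α ≠ 1) (hW : ∀ x, 0 ≤ W x)
    (hI : 0 < ∫ x, W x ^ (1 / (α - 1)) ∂ν) (hWg : 0 < ∫ x, W x * powerDensity α ν W x ∂ν) :
    renyiEntropy α ν (powerDensity α ν W) =
      log (∫ x, W x ^ (1 / (α - 1)) ∂ν)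
        + 1 / (1 - α) * log (∫ x, W x * powerDensity α ν W x ∂ν) := by
  rw [renyiEntropy, integral_powerDensity_rpow hα0 hα1 hW,
    log_mul (rpow_pos_of_pos hI _).ne' hWg.ne', log_rpow hI, mul_add, ← mul_assoc,
    one_div_mul_cancel (sub_ne_zero.2 hα1.symm), one_mul]

theorem renyiEntropy_le_powerDensity_and_eq_iff (hα0 : 0 < α) (hα1 : α ≠ 1)
    (hf0 : ∀ x, 0 ≤ f x) (hf : 0 < ∫ x, f x ∂ν) (hfα : Integrable (fun x => f x ^ α) ν)
    (hW : ∀ x, 0 ≤ W x) (hW_pos : α < 1 → ∀ x, 0 < W x)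
    (hI : 0 < ∫ x, W x ^ (1 / (α - 1)) ∂ν) (hWg : 0 < ∫ x, W x * powerDensity α ν W x ∂ν)
    (hWf : Integrable (fun x => W x * f x) ν)
    (h : 1 / (1 - α) * ∫ x, W x * f x ∂ν ≤ 1 / (1 - α) * ∫ x, W x * powerDensity α ν W x ∂ν) :
    renyiEntropy α ν f ≤ renyiEntropy α ν (powerDensity α ν W) ∧
      (renyiEntropy α ν f = renyiEntropy α ν (powerDensity α ν W) ↔
        f =ᵐ[ν] powerDensity α ν W) := by
  have hIα := rpow_pos_of_pos hI (1 - α)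
  have hgα := integral_powerDensity_rpow (ν := ν) hα0.ne' hα1 hW
  refine renyiEntropy_le_and_eq_iff hα0 hα1 hf0 hf hfα (powerDensity_nonneg hW)
    (fun hα x => mul_pos (inv_pos.2 hI) (rpow_pos_of_pos (hW_pos hα x) _))
    (hgα ▸ mul_pos hIα hWg) ?_ ?_
  · simpa only [powerDensity_rpow_sub_one hα1 hW, mul_assoc] using hWf.const_mul _
  · simp only [hgα, powerDensity_rpow_sub_one hα1 hW, mul_assoc, integral_const_mul]
    simpa only [mul_left_comm] using mul_le_mul_of_nonneg_left h hIα.le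

theorem ae_eq_powerDensity_iff (hf : ∫ x, f x ∂ν = 1) (hI : 0 < ∫ x, W x ^ (1 / (α - 1)) ∂ν) :
    f =ᵐ[ν] powerDensity α ν W ↔ ∃ c > 0, f =ᵐ[ν] fun x => c * W x ^ (1 / (α - 1)) := by
  refine ⟨fun h => ⟨_, inv_pos.2 hI, h⟩, fun ⟨c, _, h⟩ => ?_⟩
  have hc : c * ∫ x, W x ^ (1 / (α - 1)) ∂ν = 1 := by
    rw [← integral_const_mul, ← integral_congr_ae h, hf]
  rwa [eq_inv_of_mul_eq_one_left hc] at h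

end PowerDensity

/-! ### Two Euler integrals -/

section JapaneseBracket

open Module

variable {E : Type*} [NormedAddCommGroup E] [InnerProductSpace ℝ E] [FiniteDimensional ℝ E]
  [MeasurableSpace E] [BorelSpace E] {s : ℝ}

theorem integral_rpow_mul_exp_neg_mul_one_add_norm_sq {t : ℝ} (ht : 0 < t) :
    ∫ v : E, t ^ (s - 1) * exp (-((1 + ‖v‖ ^ 2) * t)) =
      π ^ ((finrank ℝ E : ℝ) / 2) * (exp (-t) * t ^ (s - (finrank ℝ E : ℝ) / 2 - 1)) := by
  have hsplit (v : E) : t ^ (s - 1) * exp (-((1 + ‖v‖ ^ 2) * t)) =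
      t ^ (s - 1) * exp (-t) * exp (-t * ‖v‖ ^ 2) := by
    rw [mul_assoc, ← exp_add]
    ring_nf
  simp only [hsplit]
  rw [integral_const_mul, GaussianFourier.integral_rexp_neg_mul_sq_norm ht,
    div_rpow pi_pos.le ht.le, sub_right_comm, rpow_sub ht (s - 1)]
  ring

theorem integrable_rpow_mul_exp_neg_mul_one_add_norm_sq (hs : (finrank ℝ E : ℝ) / 2 < s) :
    Integrable (fun q : ℝ × E => q.1 ^ (s - 1) * exp (-((1 + ‖q.2‖ ^ 2) * q.1)))
      ((volume.restrict (Set.Ioi 0)).prod volume) := by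
  rw [integrable_prod_iff (Measurable.aestronglyMeasurable (by fun_prop))]
  constructor
  · filter_upwards [ae_restrict_mem measurableSet_Ioi] with t ht
    refine .of_integral_ne_zero ?_
    rw [integral_rpow_mul_exp_neg_mul_one_add_norm_sq ht]
    have ht : 0 < t := ht
    positivity
  · have hgamma : IntegrableOn (fun t => π ^ ((finrank ℝ E : ℝ) / 2) *
        (exp (-t) * t ^ (s - (finrank ℝ E : ℝ) / 2 - 1))) (Set.Ioi 0) :=
      (GammaIntegral_convergent (sub_pos.2 hs)).const_mul _
    refine hgamma.congr_fun (fun t ht => ?_) measurableSet_Ioi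
    have ht : 0 < t := ht
    simp only [← integral_rpow_mul_exp_neg_mul_one_add_norm_sq ht]
    exact integral_congr_ae (.of_forall fun v => (norm_of_nonneg (by positivity)).symm)

-- Insert `Γ(s) (1 + ‖v‖²) ^ (-s) = ∫ t > 0, t ^ (s - 1) exp (-(1 + ‖v‖²) t)` and integrate the
-- Gaussian in `v` first.
theorem integral_one_add_norm_sq_rpow_neg (hs : (finrank ℝ E : ℝ) / 2 < s) :
    ∫ v : E, (1 + ‖v‖ ^ 2) ^ (-s) =
      π ^ ((finrank ℝ E : ℝ) / 2) * (Gamma (s - (finrank ℝ E : ℝ) / 2) / Gamma s) := by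
  have hs0 : 0 < s := lt_of_le_of_lt (by positivity) hs
  have hgamma (v : E) : ∫ t in Set.Ioi 0, t ^ (s - 1) * exp (-((1 + ‖v‖ ^ 2) * t)) =
      (1 + ‖v‖ ^ 2) ^ (-s) * Gamma s := by
    have hv : 0 < 1 + ‖v‖ ^ 2 := by positivity
    rw [integral_rpow_mul_exp_neg_mul_Ioi hs0 hv, one_div, inv_rpow hv.le, rpow_neg hv.le]
  rw [mul_div_assoc', eq_div_iff (Gamma_pos_of_pos hs0).ne', Gamma_eq_integral (sub_pos.2 hs),
    ← integral_mul_const, ← integral_const_mul]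
  calc ∫ v : E, (1 + ‖v‖ ^ 2) ^ (-s) * Gamma s
      = ∫ v : E, ∫ t in Set.Ioi 0, t ^ (s - 1) * exp (-((1 + ‖v‖ ^ 2) * t)) := by
        simp only [hgamma]
    _ = ∫ t in Set.Ioi 0, ∫ v : E, t ^ (s - 1) * exp (-((1 + ‖v‖ ^ 2) * t)) :=
        (integral_integral_swap (integrable_rpow_mul_exp_neg_mul_one_add_norm_sq hs)).symm
    _ = _ := setIntegral_congr_fun measurableSet_Ioi fun t ht =>
        integral_rpow_mul_exp_neg_mul_one_add_norm_sq ht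

end JapaneseBracket

theorem integral_one_add_sq_rpow_neg {s : ℝ} (hs : 1 / 2 < s) :
    ∫ u : ℝ, (1 + u ^ 2) ^ (-s) = √π * (Gamma (s - 1 / 2) / Gamma s) := by
  simpa [sqrt_eq_rpow] using integral_one_add_norm_sq_rpow_neg (E := ℝ) (s := s) (by simpa using hs)

theorem integral_rpow_mul_one_sub_rpow {a b : ℝ} (ha : 0 < a) (hb : 0 < b) :
    ∫ v in (0 : ℝ)..1, v ^ (a - 1) * (1 - v) ^ (b - 1) = Gamma a * Gamma b / Gamma (a + b) := by
  have hbeta := ProbabilityTheory.beta_eq_betaIntegralReal a b ha hb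
  rw [ProbabilityTheory.beta, Complex.betaIntegral] at hbeta
  rw [hbeta, ← Complex.ofReal_re (∫ v in (0 : ℝ)..1, _), ← intervalIntegral.integral_ofReal]
  congr 1
  refine intervalIntegral.integral_congr fun v hv => ?_
  rw [Set.uIcc_of_le zero_le_one] at hv
  push_cast [Complex.ofReal_cpow hv.1, Complex.ofReal_cpow (sub_nonneg.2 hv.2)]
  rfl

-- The substitution `u = 2 v - 1` turns `1 - u²` into `4 v (1 - v)`.
theorem integral_one_sub_sq_rpow_eq_beta {b : ℝ} (hb : -1 < b) :
    ∫ u in (-1 : ℝ)..1, (1 - u ^ 2) ^ b =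
      2 * 4 ^ b * (Gamma (b + 1) * Gamma (b + 1) / Gamma (b + 1 + (b + 1))) := by
  have hsubst := intervalIntegral.integral_comp_mul_sub (a := 0) (b := 1)
    (fun u : ℝ => (1 - u ^ 2) ^ b) two_ne_zero 1
  have hfactor : ∫ v in (0 : ℝ)..1, (1 - (2 * v - 1) ^ 2) ^ b =
      ∫ v in (0 : ℝ)..1, 4 ^ b * (v ^ (b + 1 - 1) * (1 - v) ^ (b + 1 - 1)) := by
    refine intervalIntegral.integral_congr fun v hv => ?_
    rw [Set.uIcc_of_le zero_le_one] at hv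
    have hv' : 0 ≤ 1 - v := sub_nonneg.2 hv.2
    simp only [add_sub_cancel_right]
    rw [← mul_rpow hv.1 hv', ← mul_rpow (by norm_num) (mul_nonneg hv.1 hv')]
    ring_nf
  rw [hfactor, intervalIntegral.integral_const_mul,
    integral_rpow_mul_one_sub_rpow (by linarith) (by linarith)] at hsubst
  norm_num at hsubst
  linarith

theorem integral_one_sub_sq_rpow {b : ℝ} (hb : -1 < b) :
    ∫ u in (-1 : ℝ)..1, (1 - u ^ 2) ^ b = √π * (Gamma (b + 1) / Gamma (b + 1 + 1 / 2)) := by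
  have hG₁ := Gamma_pos_of_pos (show 0 < b + 1 + 1 / 2 by linarith)
  have hG₂ := Gamma_pos_of_pos (show 0 < 2 * (b + 1) by linarith)
  have hpow : (2 : ℝ) * 4 ^ b * 2 ^ (1 - 2 * (b + 1)) = 1 := by
    rw [show (4 : ℝ) = 2 ^ (2 : ℝ) by norm_num, ← rpow_mul two_pos.le, mul_comm 2,
      ← rpow_add_one two_ne_zero, ← rpow_add two_pos]
    ring_nf
    exact rpow_zero 2
  rw [integral_one_sub_sq_rpow_eq_beta hb, ← two_mul, ← mul_div_assoc, ← mul_div_assoc,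
    div_eq_div_iff hG₂.ne' hG₁.ne']
  calc _ = 2 * 4 ^ b * Gamma (b + 1) * (Gamma (b + 1) * Gamma (b + 1 + 1 / 2)) := by ring
    _ = 2 * 4 ^ b * 2 ^ (1 - 2 * (b + 1)) * (√π * Gamma (b + 1) * Gamma (2 * (b + 1))) := by
        rw [Gamma_mul_Gamma_add_half]
        ring
    _ = √π * Gamma (b + 1) * Gamma (2 * (b + 1)) := by rw [hpow, one_mul]

theorem integral_max_one_sub_sq_rpow {b : ℝ} (hb : 0 < b) :
    ∫ u : ℝ, max (1 - u ^ 2) 0 ^ b = √π * (Gamma (b + 1) / Gamma (b + 1 + 1 / 2)) := by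
  have hindicator : (fun u : ℝ => max (1 - u ^ 2) 0 ^ b) =
      (Set.Ioc (-1) 1).indicator fun u => (1 - u ^ 2) ^ b := by
    ext u
    by_cases hu : u ∈ Set.Ioc (-1 : ℝ) 1
    · rw [Set.indicator_of_mem hu, max_eq_left (by nlinarith [hu.1, hu.2])]
    · have hu' : 1 ≤ |u| := by
        contrapose! hu
        exact ⟨(abs_lt.1 hu).1, (abs_lt.1 hu).2.le⟩
      rw [Set.indicator_of_notMem hu,
        max_eq_right (sub_nonpos.2 ((one_le_sq_iff_one_le_abs u).2 hu')), zero_rpow hb.ne']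
  rw [hindicator, integral_indicator measurableSet_Ioc,
    ← intervalIntegral.integral_of_le (by norm_num), integral_one_sub_sq_rpow (by linarith)]

/-! ### Truncated quadratic weights -/

/-- The quadratic `1 + β ((x - μ) / σ) ^ 2` truncated at zero, whose powers are the unnormalized
α-Gaussian densities of location `μ` and scale `σ`. -/
noncomputable def quadraticWeight (β μ σ x : ℝ) : ℝ :=
  max (1 + β * ((x - μ) / σ) ^ 2) 0

section QuadraticWeight

variable {β μ σ p : ℝ} {f : ℝ → ℝ}

theorem quadraticWeight_nonneg (β μ σ x : ℝ) : 0 ≤ quadraticWeight β μ σ x :=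
  le_max_right _ _

theorem quadraticWeight_of_nonneg (hβ : 0 ≤ β) (μ σ x : ℝ) :
    quadraticWeight β μ σ x = 1 + β * ((x - μ) / σ) ^ 2 :=
  max_eq_left (by positivity)

theorem quadraticWeight_pos_of_nonneg (hβ : 0 ≤ β) (μ σ x : ℝ) : 0 < quadraticWeight β μ σ x := by
  rw [quadraticWeight_of_nonneg hβ]
  positivity

theorem quadraticWeight_rpow_add_one (hp : p + 1 ≠ 0) (x : ℝ) :
    quadraticWeight β μ σ x ^ (p + 1) = quadraticWeight β μ σ x * quadraticWeight β μ σ x ^ p := by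
  rw [rpow_add_one' (quadraticWeight_nonneg β μ σ x) hp, mul_comm]

theorem mul_div_sq_eq_sqrt_div_mul_sq (hβ : 0 ≤ β) (y : ℝ) :
    β * (y / σ) ^ 2 = (√β / σ * y) ^ 2 := by
  rw [mul_pow, div_pow, div_pow, sq_sqrt hβ]
  ring

theorem quadraticWeight_eq_one_add_sq (hβ : 0 ≤ β) (μ σ x : ℝ) :
    quadraticWeight β μ σ x = 1 + (√β / σ * (x - μ)) ^ 2 := by
  rw [quadraticWeight_of_nonneg hβ, mul_div_sq_eq_sqrt_div_mul_sq hβ]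

theorem quadraticWeight_neg_eq_max_one_sub_sq (hβ : 0 ≤ β) (μ σ x : ℝ) :
    quadraticWeight (-β) μ σ x = max (1 - (√β / σ * (x - μ)) ^ 2) 0 := by
  rw [quadraticWeight, neg_mul, ← sub_eq_add_neg, mul_div_sq_eq_sqrt_div_mul_sq hβ]

theorem integral_comp_mul_sub_const (F : ℝ → ℝ) {k : ℝ} (hk : 0 < k) (μ : ℝ) :
    ∫ x, F (k * (x - μ)) = k⁻¹ * ∫ u, F u := by
  rw [integral_sub_right_eq_self (fun x => F (k * x)) μ, Measure.integral_comp_mul_left,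
    abs_of_pos (inv_pos.2 hk), smul_eq_mul]

theorem inv_sqrt_div_mul_sqrt_pi (β σ : ℝ) : (√β / σ)⁻¹ * √π = σ * √(π / β) := by
  rw [sqrt_div pi_pos.le, inv_div]
  ring

theorem integral_quadraticWeight_rpow_neg {s : ℝ} (hβ : 0 < β) (hσ : 0 < σ) (hs : 1 / 2 < s)
    (μ : ℝ) :
    ∫ x, quadraticWeight β μ σ x ^ (-s) = σ * √(π / β) * (Gamma (s - 1 / 2) / Gamma s) := by
  simp only [quadraticWeight_eq_one_add_sq hβ.le]
  rw [integral_comp_mul_sub_const (fun u => (1 + u ^ 2) ^ (-s)) (by positivity),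
    integral_one_add_sq_rpow_neg hs, ← mul_assoc, inv_sqrt_div_mul_sqrt_pi]

theorem integral_quadraticWeight_neg_rpow (hβ : 0 < β) (hσ : 0 < σ) (hp : 0 < p) (μ : ℝ) :
    ∫ x, quadraticWeight (-β) μ σ x ^ p =
      σ * √(π / β) * (Gamma (p + 1) / Gamma (p + 1 + 1 / 2)) := by
  simp only [quadraticWeight_neg_eq_max_one_sub_sq hβ.le]
  rw [integral_comp_mul_sub_const (fun u => max (1 - u ^ 2) 0 ^ p) (by positivity),
    integral_max_one_sub_sq_rpow hp, ← mul_assoc, inv_sqrt_div_mul_sqrt_pi]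

theorem integral_quadraticWeight_rpow_pos (hσ : 0 < σ)
    (h : 0 < β ∧ p < -1 / 2 ∨ β < 0 ∧ 0 < p) (μ : ℝ) :
    0 < ∫ x, quadraticWeight β μ σ x ^ p := by
  rcases h with ⟨hβ, hp⟩ | ⟨hβ, hp⟩
  · have := Gamma_pos_of_pos (show 0 < -p - 1 / 2 by linarith)
    have := Gamma_pos_of_pos (show 0 < -p by linarith)
    rw [← neg_neg p, integral_quadraticWeight_rpow_neg hβ hσ (by linarith)]
    positivity
  · have := Gamma_pos_of_pos (show 0 < p + 1 by linarith)
    have := Gamma_pos_of_pos (show 0 < p + 1 + 1 / 2 by linarith)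
    have := neg_pos.2 hβ
    rw [← neg_neg β, integral_quadraticWeight_neg_rpow this hσ hp]
    positivity

theorem integral_quadraticWeight_rpow_add_one (hσ : 0 < σ)
    (h : 0 < β ∧ p < -3 / 2 ∨ β < 0 ∧ 0 < p) (μ : ℝ) :
    ∫ x, quadraticWeight β μ σ x ^ (p + 1) =
      (p + 1) / (p + 3 / 2) * ∫ x, quadraticWeight β μ σ x ^ p := by
  rcases h with ⟨hβ, hp⟩ | ⟨hβ, hp⟩
  · have hΓ := Gamma_add_one (show -(p + 1) ≠ 0 by linarith)
    have hΓ' := Gamma_add_one (show -(p + 1) - 1 / 2 ≠ 0 by linarith)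
    rw [show -(p + 1) + 1 = -p by ring] at hΓ
    rw [show -(p + 1) - 1 / 2 + 1 = -p - 1 / 2 by ring] at hΓ'
    rw [← neg_neg (p + 1), integral_quadraticWeight_rpow_neg hβ hσ (by linarith), ← neg_neg p,
      integral_quadraticWeight_rpow_neg hβ hσ (by linarith), neg_neg, hΓ, hΓ']
    have hp₁ : p + 1 ≠ 0 := by linarith
    have hp₂ : p * 2 + 3 ≠ 0 := by linarith
    have := (Gamma_pos_of_pos (show 0 < -(p + 1) by linarith)).ne'
    generalize Gamma (-(p + 1) - 1 / 2) = G
    rw [show -(p + 1) - 1 / 2 = -(p + 3 / 2) by ring]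
    field_simp
  · have hΓ := Gamma_add_one (show p + 1 ≠ 0 by linarith)
    have hΓ' := Gamma_add_one (show p + 1 + 1 / 2 ≠ 0 by linarith)
    rw [← neg_neg β, integral_quadraticWeight_neg_rpow (neg_pos.2 hβ) hσ hp,
      integral_quadraticWeight_neg_rpow (neg_pos.2 hβ) hσ (by linarith), hΓ,
      add_right_comm (p + 1), hΓ', mul_div_mul_comm, show p + 1 + 1 / 2 = p + 3 / 2 by ring]
    ring

theorem integrable_quadratic_mul (hf : Integrable f)
    (hf2 : Integrable fun x => (x - μ) ^ 2 * f x) (β σ : ℝ) :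
    Integrable fun x => (1 + β * ((x - μ) / σ) ^ 2) * f x := by
  refine (hf.add (hf2.const_mul (β / σ ^ 2))).congr (.of_forall fun x => ?_)
  simp only [Pi.add_apply]
  ring

theorem integral_quadratic_mul (hf : ∫ x, f x = 1) (hσ : 0 < σ)
    (hf2 : ∫ x, (x - μ) ^ 2 * f x = σ ^ 2) (β : ℝ) :
    ∫ x, (1 + β * ((x - μ) / σ) ^ 2) * f x = 1 + β := by
  have hsplit x : (1 + β * ((x - μ) / σ) ^ 2) * f x = f x + β / σ ^ 2 * ((x - μ) ^ 2 * f x) := by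
    ring
  have hf2' : Integrable fun x => (x - μ) ^ 2 * f x :=
    .of_integral_ne_zero (by rw [hf2]; positivity)
  have hf' : Integrable f := .of_integral_ne_zero (by simp [hf])
  simp only [hsplit]
  rw [integral_add hf' (hf2'.const_mul _), integral_const_mul, hf, hf2,
    div_mul_cancel₀ β (by positivity)]

theorem integrable_quadraticWeight_mul (hf : Integrable f)
    (hf2 : Integrable fun x => (x - μ) ^ 2 * f x) (β σ : ℝ) :
    Integrable fun x => quadraticWeight β μ σ x * f x := by
  refine (integrable_quadratic_mul hf hf2 β σ).mono
    (Measurable.aestronglyMeasurable (by unfold quadraticWeight; fun_prop) |>.mul hf.1)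
    (.of_forall fun x => ?_)
  rw [norm_mul, norm_mul]
  gcongr
  rw [norm_of_nonneg (quadraticWeight_nonneg β μ σ x)]
  exact max_le (le_abs_self _) (abs_nonneg _)

theorem one_add_le_integral_quadraticWeight_mul (hf0 : ∀ x, 0 ≤ f x) (hf : ∫ x, f x = 1)
    (hσ : 0 < σ) (hf2 : ∫ x, (x - μ) ^ 2 * f x = σ ^ 2) (β : ℝ) :
    1 + β ≤ ∫ x, quadraticWeight β μ σ x * f x := by
  have hf' : Integrable f := .of_integral_ne_zero (by simp [hf])
  have hf2' : Integrable fun x => (x - μ) ^ 2 * f x :=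
    .of_integral_ne_zero (by rw [hf2]; positivity)
  rw [← integral_quadratic_mul hf hσ hf2 β]
  exact integral_mono (integrable_quadratic_mul hf' hf2' β σ)
    (integrable_quadraticWeight_mul hf' hf2' β σ)
    fun x => mul_le_mul_of_nonneg_right (le_max_left _ _) (hf0 x)

theorem integral_quadraticWeight_mul_of_nonneg (hf : ∫ x, f x = 1) (hσ : 0 < σ)
    (hf2 : ∫ x, (x - μ) ^ 2 * f x = σ ^ 2) (hβ : 0 ≤ β) :
    ∫ x, quadraticWeight β μ σ x * f x = 1 + β := by
  simp only [quadraticWeight_of_nonneg hβ, integral_quadratic_mul hf hσ hf2]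

end QuadraticWeight

/-! ### α-Gaussian densities -/

/-- The α-Gaussian density with mean `μ` and standard deviation `σ`, for `1 / 3 < α` and
`α ≠ 1`. -/
noncomputable def alphaGaussian (α μ σ : ℝ) : ℝ → ℝ :=
  powerDensity α volume (quadraticWeight ((1 - α) / (3 * α - 1)) μ σ)

section AlphaGaussian

variable {α σ : ℝ}

theorem one_add_alphaGaussian_coeff (hα : 1 / 3 < α) :
    1 + (1 - α) / (3 * α - 1) = 2 * α / (3 * α - 1) := by
  have hα3 : 3 * α - 1 ≠ 0 := by linarith
  rw [one_add_div hα3]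
  ring

theorem alphaGaussian_coeff_and_exponent (hα : 1 / 3 < α) (hα1 : α ≠ 1) :
    0 < (1 - α) / (3 * α - 1) ∧ 1 / (α - 1) < -3 / 2 ∨
      (1 - α) / (3 * α - 1) < 0 ∧ 0 < 1 / (α - 1) := by
  have h3 : 0 < 3 * α - 1 := by linarith
  rcases hα1.lt_or_gt with h1 | h1
  · refine .inl ⟨div_pos (sub_pos.2 h1) h3, ?_⟩
    rw [div_lt_iff_of_neg (sub_neg.2 h1)]
    linarith
  · exact .inr ⟨div_neg_of_neg_of_pos (sub_neg.2 h1) h3, one_div_pos.2 (sub_pos.2 h1)⟩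

theorem integral_alphaGaussian_kernel_pos (hα : 1 / 3 < α) (hα1 : α ≠ 1) (hσ : 0 < σ) (μ : ℝ) :
    0 < ∫ x, quadraticWeight ((1 - α) / (3 * α - 1)) μ σ x ^ (1 / (α - 1)) :=
  integral_quadraticWeight_rpow_pos hσ
    ((alphaGaussian_coeff_and_exponent hα hα1).imp_left <| And.imp_right (by intro; linarith)) μ

theorem integral_quadraticWeight_mul_alphaGaussian (hα : 1 / 3 < α) (hα1 : α ≠ 1) (hσ : 0 < σ)
    (μ : ℝ) :
    ∫ x, quadraticWeight ((1 - α) / (3 * α - 1)) μ σ x * alphaGaussian α μ σ x =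
      2 * α / (3 * α - 1) := by
  have hcases := alphaGaussian_coeff_and_exponent hα hα1
  have hp : 1 / (α - 1) + 1 ≠ 0 := by rcases hcases with h | h <;> linarith
  have hα1' : α - 1 ≠ 0 := sub_ne_zero.2 hα1
  have hratio : (1 / (α - 1) + 1) / (1 / (α - 1) + 3 / 2) = 2 * α / (3 * α - 1) := by
    rw [show 1 / (α - 1) + 1 = α / (α - 1) by field_simp; ring,
      show 1 / (α - 1) + 3 / 2 = (3 * α - 1) / (2 * (α - 1)) by field_simp; ring]
    field_simp
  simp only [alphaGaussian, powerDensity, mul_left_comm (quadraticWeight _ _ _ _),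
    integral_const_mul, ← quadraticWeight_rpow_add_one hp]
  rw [integral_quadraticWeight_rpow_add_one hσ hcases, hratio, mul_left_comm,
    inv_mul_cancel₀ (integral_alphaGaussian_kernel_pos hα hα1 hσ μ).ne', mul_one]

theorem renyiEntropy_alphaGaussian (hα : 1 / 3 < α) (hα1 : α ≠ 1) (hσ : 0 < σ) (μ : ℝ) :
    renyiEntropy α volume (alphaGaussian α μ σ) =
      log (∫ x, quadraticWeight ((1 - α) / (3 * α - 1)) μ σ x ^ (1 / (α - 1)))
        + 1 / (1 - α) * log (2 * α / (3 * α - 1)) := by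
  have hmoment := integral_quadraticWeight_mul_alphaGaussian hα hα1 hσ μ
  have hα0 : 0 < α := by linarith
  have hα3 : 0 < 3 * α - 1 := by linarith
  rw [← hmoment]
  exact renyiEntropy_powerDensity hα0.ne' hα1 (quadraticWeight_nonneg _ μ σ)
    (integral_alphaGaussian_kernel_pos hα hα1 hσ μ) (hmoment ▸ by positivity)

theorem log_sqrt_mul_sqrt_pi_div_mul {β σ2 R : ℝ} (hβ : 0 < β) (hσ2 : 0 < σ2) (hR : 0 < R) :
    log (√σ2 * √(π / β) * R) = 1 / 2 * log (β⁻¹ * (π * σ2)) + log R := by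
  rw [← sqrt_mul hσ2.le, log_mul (by positivity) hR.ne', log_sqrt (by positivity),
    show σ2 * (π / β) = β⁻¹ * (π * σ2) by ring]
  ring

theorem renyiEntropy_alphaGaussian_of_lt_one (hα : 1 / 3 < α) (hα1 : α < 1) {σ2 : ℝ}
    (hσ2 : 0 < σ2) (μ : ℝ) :
    renyiEntropy α volume (alphaGaussian α μ √σ2) =
      1 / 2 * log ((3 * α - 1) / (1 - α) * (π * σ2)) + 1 / (1 - α) * log (2 * α / (3 * α - 1))
        + log (Gamma (1 / (1 - α) - 1 / 2) / Gamma (1 / (1 - α))) := by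
  have hβ : 0 < (1 - α) / (3 * α - 1) := div_pos (by linarith) (by linarith)
  have hs : 1 < 1 / (1 - α) := (one_lt_div (by linarith)).2 (by linarith)
  have := Gamma_pos_of_pos (show 0 < 1 / (1 - α) - 1 / 2 by linarith)
  have := Gamma_pos_of_pos (one_pos.trans hs)
  rw [renyiEntropy_alphaGaussian hα hα1.ne (sqrt_pos.2 hσ2), ← neg_sub 1 α,
    one_div_neg_eq_neg_one_div, integral_quadraticWeight_rpow_neg hβ (sqrt_pos.2 hσ2) (by linarith),
    log_sqrt_mul_sqrt_pi_div_mul hβ hσ2 (by positivity), inv_div]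
  ring

theorem renyiEntropy_alphaGaussian_of_one_lt (hα1 : 1 < α) {σ2 : ℝ} (hσ2 : 0 < σ2) (μ : ℝ) :
    renyiEntropy α volume (alphaGaussian α μ √σ2) =
      1 / 2 * log ((3 * α - 1) / (α - 1) * (π * σ2)) + 1 / (α - 1) * log ((3 * α - 1) / (2 * α))
        + log (Gamma (α / (α - 1)) / Gamma (α / (α - 1) + 1 / 2)) := by
  have hα1' : 0 < α - 1 := sub_pos.2 hα1
  have hβ : 0 < (α - 1) / (3 * α - 1) := div_pos hα1' (by linarith)
  have hexponent : 1 / (α - 1) + 1 = α / (α - 1) := by field_simp; ring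
  have hlog : 1 / (1 - α) * log (2 * α / (3 * α - 1)) =
      1 / (α - 1) * log ((3 * α - 1) / (2 * α)) := by
    rw [← inv_div (2 * α), log_inv, ← neg_sub α 1, one_div_neg_eq_neg_one_div]
    ring
  have := Gamma_pos_of_pos (show 0 < α / (α - 1) by positivity)
  have := Gamma_pos_of_pos (show 0 < α / (α - 1) + 1 / 2 by positivity)
  rw [renyiEntropy_alphaGaussian (by linarith) hα1.ne' (sqrt_pos.2 hσ2), hlog, ← neg_sub α 1,
    neg_div, integral_quadraticWeight_neg_rpow hβ (sqrt_pos.2 hσ2) (one_div_pos.2 hα1'), hexponent,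
    log_sqrt_mul_sqrt_pi_div_mul hβ hσ2 (by positivity), inv_div]
  ring

theorem renyiEntropy_le_alphaGaussian_and_eq_iff {f : ℝ → ℝ} {μ : ℝ} (hα : 1 / 3 < α)
    (hα1 : α ≠ 1) (hf0 : ∀ x, 0 ≤ f x) (hf : ∫ x, f x = 1) (hfα : Integrable fun x => f x ^ α)
    (hσ : 0 < σ) (hf2 : ∫ x, (x - μ) ^ 2 * f x = σ ^ 2) :
    renyiEntropy α volume f ≤ renyiEntropy α volume (alphaGaussian α μ σ) ∧
      (renyiEntropy α volume f = renyiEntropy α volume (alphaGaussian α μ σ) ↔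
        ∃ c > 0, f =ᵐ[volume] fun x =>
          c * quadraticWeight ((1 - α) / (3 * α - 1)) μ σ x ^ (1 / (α - 1))) := by
  have hα0 : 0 < α := by linarith
  have hα3 : 0 < 3 * α - 1 := by linarith
  have hI := integral_alphaGaussian_kernel_pos hα hα1 hσ μ
  have hWg := integral_quadraticWeight_mul_alphaGaussian hα hα1 hσ μ
  have hβ (h1 : α < 1) : 0 ≤ (1 - α) / (3 * α - 1) := div_nonneg (sub_nonneg.2 h1.le) hα3.le
  rw [← ae_eq_powerDensity_iff hf hI]
  refine renyiEntropy_le_powerDensity_and_eq_iff hα0 hα1 hf0 (by simp [hf]) hfα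
    (quadraticWeight_nonneg _ μ σ) (fun h => quadraticWeight_pos_of_nonneg (hβ h) μ σ) hI
    (hWg.symm ▸ by positivity)
    (integrable_quadraticWeight_mul (.of_integral_ne_zero (by simp [hf]))
      (.of_integral_ne_zero (by rw [hf2]; positivity)) _ σ) ?_
  refine le_of_le_of_eq ?_ (congrArg _ hWg.symm)
  rw [← one_add_alphaGaussian_coeff hα]
  rcases hα1.lt_or_gt with h1 | h1
  · rw [integral_quadraticWeight_mul_of_nonneg hf hσ hf2 (hβ h1)]
  · exact mul_le_mul_of_nonpos_left (one_add_le_integral_quadraticWeight_mul hf0 hf hσ hf2 _)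
      (one_div_nonpos.2 (sub_nonpos.2 h1.le))

end AlphaGaussian

/-- Maximum Rényi-entropy bound under a variance constraint: if `𝒳` has density `f`,
mean `μ` and finite variance `σ² > 0`, then for `1/3 < α < 1` or `α > 1` the stated bounds
on `h_α(𝒳)` hold, with equality iff `𝒳` is α-Gaussian. -/
theorem maxent_renyi_variance
    (α : ℝ) (hα0 : 0 < α) (hα1 : α ≠ 1)
    (f : ℝ → ℝ) (hfm : Measurable f) (hf0 : ∀ x, 0 ≤ f x)
    (hf1 : ∫ x, f x = 1) (hfi : Integrable f)
    (hfα : Integrable (fun x => f x ^ α))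
    (μ : ℝ) (hμ : μ = ∫ x, x * f x) (hμi : Integrable (fun x => x * f x))
    (σ2 : ℝ) (hσ2 : σ2 = ∫ x, (x - μ) ^ 2 * f x)
    (hσ2i : Integrable (fun x => (x - μ) ^ 2 * f x)) (hσ2pos : 0 < σ2) :
    ((1 / 3 < α ∧ α < 1) →
      ((1 / (1 - α)) * Real.log (∫ x, f x ^ α) ≤
          (1 / 2) * Real.log ((3 * α - 1) / (1 - α) * (π * σ2))
            + (1 / (1 - α)) * Real.log (2 * α / (3 * α - 1))
            + Real.log (Real.Gamma (1 / (1 - α) - 1 / 2) / Real.Gamma (1 / (1 - α))) ∧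
        ((1 / (1 - α)) * Real.log (∫ x, f x ^ α) =
            (1 / 2) * Real.log ((3 * α - 1) / (1 - α) * (π * σ2))
              + (1 / (1 - α)) * Real.log (2 * α / (3 * α - 1))
              + Real.log (Real.Gamma (1 / (1 - α) - 1 / 2) / Real.Gamma (1 / (1 - α))) ↔
          ∃ c > 0, f =ᵐ[volume] fun x =>
            c * (max (1 + (1 - α) / (3 * α - 1) * ((x - μ) / Real.sqrt σ2) ^ 2) 0)
              ^ (1 / (α - 1))))) ∧
    (1 < α →
      ((1 / (1 - α)) * Real.log (∫ x, f x ^ α) ≤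
          (1 / 2) * Real.log ((3 * α - 1) / (α - 1) * (π * σ2))
            + (1 / (α - 1)) * Real.log ((3 * α - 1) / (2 * α))
            + Real.log (Real.Gamma (α / (α - 1)) / Real.Gamma (α / (α - 1) + 1 / 2)) ∧
        ((1 / (1 - α)) * Real.log (∫ x, f x ^ α) =
            (1 / 2) * Real.log ((3 * α - 1) / (α - 1) * (π * σ2))
              + (1 / (α - 1)) * Real.log ((3 * α - 1) / (2 * α))
              + Real.log (Real.Gamma (α / (α - 1)) / Real.Gamma (α / (α - 1) + 1 / 2)) ↔
          ∃ c > 0, f =ᵐ[volume] fun x =>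
            c * (max (1 + (1 - α) / (3 * α - 1) * ((x - μ) / Real.sqrt σ2) ^ 2) 0)
              ^ (1 / (α - 1))))) := by
  have hσ : 0 < √σ2 := sqrt_pos.2 hσ2pos
  have hvar : ∫ x, (x - μ) ^ 2 * f x = √σ2 ^ 2 := hσ2.symm.trans (sq_sqrt hσ2pos.le).symm
  refine ⟨fun ⟨hα, h1⟩ => ?_, fun h1 => ?_⟩
  · rw [← renyiEntropy_alphaGaussian_of_lt_one hα h1 hσ2pos μ]
    exact renyiEntropy_le_alphaGaussian_and_eq_iff hα hα1 hf0 hf1 hfα hσ hvar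
  · rw [← renyiEntropy_alphaGaussian_of_one_lt h1 hσ2pos μ]
    exact renyiEntropy_le_alphaGaussian_and_eq_iff (by linarith) hα1 hf0 hf1 hfα hσ hvar
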